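/- For every real number N and all real x, y, z, w with z ≠ 0, w ≠ 0, z + w ≠ 0, yz + 1 > 0 and y(z+w) + 1 > 0, the canonical solution φ_N(x,y) = (x·(y+1)^{N−1}, y/(y+1)) satisfies the projective translation equation: (1/(z+w))·φ_N(x(z+w), y(z+w)) = (1/w)·φ_N(φ_N(xz, yz)·(w/z)). Concretely, writing (u,v) = (xz·(yz+1)^{N−1}, yz/(yz+1)), one has (1/w)·(u(w/z))·((v(w/z))+1)^{N−1} = x·(y(z+w)+1)^{N−1} and (1/w)·(v(w/z))/((v(w/z))+1) = y/(y(z+w)+1). -/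

import Mathlib

/-! With `φᵗ(p) = t⁻¹ φ(t p)`, the projective translation equation becomes the flow law
`φ^{z+w} = φʷ ∘ φᶻ`. For the canonical solution, `φᵗ(x, y) = (x (yt + 1)^{N-1}, y / (yt + 1))`, and
the flow law amounts to `yt + 1` being a multiplicative cocycle: along the orbit of `y`, the factor
over time `z + w` is the factor over time `z` times the one over time `w` from `y / (yz + 1)`. -/

section TimeMap

variable {K V : Type*} [Field K] [AddCommGroup V] [Module K V]

/-- The time-`t` map `p ↦ t⁻¹ φ(t p)` of a projective flow `φ`. It is meaningful for `t ≠ 0`; at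
`t = 0`, where the boundary condition prescribes the identity, it takes the junk value `0`. -/
def timeMap (φ : V → V) (t : K) (p : V) : V :=
  t⁻¹ • φ (t • p)

theorem timeMap_timeMap (φ : V → V) (z w : K) (p : V) :
    timeMap φ w (timeMap φ z p) = w⁻¹ • φ ((w / z) • φ (z • p)) := by
  simp only [timeMap, smul_smul, div_eq_mul_inv]

end TimeMap

theorem div_mul_add_one_mul_add_one {K : Type*} [Field K] {y z : K} (w : K) (h : y * z + 1 ≠ 0) :
    y / (y * z + 1) * w + 1 = (y * (z + w) + 1) / (y * z + 1) := by
  field_simp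
  ring

/-- The canonical solution `φ_N` of level `N`. It is meaningful for `0 < p.2 + 1`;
elsewhere the power, and at `p.2 + 1 = 0` also the quotient, takes junk values. -/
noncomputable def canonicalSolution (N : ℝ) (p : ℝ × ℝ) : ℝ × ℝ :=
  (p.1 * (p.2 + 1) ^ (N - 1), p.2 / (p.2 + 1))

theorem timeMap_canonicalSolution (N x y : ℝ) {t : ℝ} (ht : t ≠ 0) :
    timeMap (canonicalSolution N) t (x, y) = (x * (y * t + 1) ^ (N - 1), y / (y * t + 1)) := by
  simp only [timeMap, canonicalSolution, Prod.smul_mk, smul_eq_mul, mul_comm t y]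
  congr 1 <;> field_simp

theorem timeMap_canonicalSolution_add (N x : ℝ) {y z w : ℝ} (hz : z ≠ 0) (hw : w ≠ 0)
    (hzw : z + w ≠ 0) (h₁ : 0 < y * z + 1) (h₂ : 0 < y * (z + w) + 1) :
    timeMap (canonicalSolution N) (z + w) (x, y) =
      timeMap (canonicalSolution N) w (timeMap (canonicalSolution N) z (x, y)) := by
  have hpow : (y * z + 1) ^ (N - 1) ≠ 0 := (Real.rpow_pos_of_pos h₁ _).ne'
  rw [timeMap_canonicalSolution N _ _ hz, timeMap_canonicalSolution N _ _ hw,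
    timeMap_canonicalSolution N _ _ hzw, div_mul_add_one_mul_add_one w h₁.ne',
    Real.div_rpow h₂.le h₁.le, mul_assoc, mul_div_cancel₀ _ hpow,
    div_div_div_cancel_right₀ h₁.ne']

/-- The canonical solution `φ_N(x,y) = (x(y+1)^{N-1}, y/(y+1))` satisfies
the projective translation equation
`(1/(z+w))·φ_N(x(z+w), y(z+w)) = (1/w)·φ_N(φ_N(xz, yz)·(w/z))`. -/
theorem canonical_solution_satisfies_PrTE (N x y z w : ℝ)
    (hz : z ≠ 0) (hw : w ≠ 0) (hzw : z + w ≠ 0)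
    (h1 : y * z + 1 > 0) (h2 : y * (z + w) + 1 > 0) :
    (1 / w) * ((x * z * (y * z + 1) ^ (N - 1)) * (w / z)) *
        (((y * z / (y * z + 1)) * (w / z)) + 1) ^ (N - 1)
      = x * (y * (z + w) + 1) ^ (N - 1) ∧
    (1 / w) * (((y * z / (y * z + 1)) * (w / z)) /
        (((y * z / (y * z + 1)) * (w / z)) + 1))
      = y / (y * (z + w) + 1) := by
  have flow_law := timeMap_canonicalSolution_add N x hz hw hzw h1 h2
  rw [timeMap_canonicalSolution N x y hzw, timeMap_timeMap] at flow_law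
  simpa only [canonicalSolution, Prod.smul_mk, smul_eq_mul, Prod.mk.injEq, one_div, mul_comm z,
    mul_comm (w / z), mul_assoc w⁻¹] using flow_law.symm
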